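/- arXiv:1501.04124 — 3 statements merged into one kernel-verified Lean document; each statement's English description precedes it below -/
import Mathlib

section
/- Let F be a holomorphic function on a neighborhood of 0 in ℂ with F(0) = 0 and F′(0) ≠ 0. Then there exist constants C > 0 and δ ∈ (0,1) such that for all z with 0 < |z| < δ one has 0 < |F(z)| < 1 and |1/log(1/|F(z)|) − 1/log(1/|z|)| ≤ C·(1/log(1/|z|))². That is, ilog|F(z)| = ilog|z| + O((ilog|z|)²) as z → 0. -/
/-!
Since `F 0 = 0`, differentiability at `0` gives `(a/2)‖z‖ ≤ ‖F z‖ ≤ (3a/2)‖z‖` near `0`, where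
`a = ‖F'(0)‖ > 0`. Hence `M = log (1/‖F z‖)` and `L = log (1/‖z‖)` differ by at most a constant
`K`, and once `L > 2K` one has `M ≥ L/2`, so `|1/M - 1/L| = |L - M|/(M L) ≤ 2K/L²`.
-/

open Real

/-- The two-sided linear bound on `‖F z‖` near a simple zero. -/
lemma exists_linear_bounds {F : ℂ → ℂ} (hd : DifferentiableAt ℂ F 0) (hF0 : F 0 = 0)
    (hF' : deriv F 0 ≠ 0) :
    ∃ ε > (0 : ℝ), ∀ z : ℂ, ‖z‖ < ε →
      ‖deriv F 0‖ / 2 * ‖z‖ ≤ ‖F z‖ ∧ ‖F z‖ ≤ 3 * ‖deriv F 0‖ / 2 * ‖z‖ := by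
  have ha : 0 < ‖deriv F 0‖ := norm_pos_iff.mpr hF'
  have hlo := (hasDerivAt_iff_isLittleO.mp hd.hasDerivAt).def (half_pos ha)
  obtain ⟨ε, hε, h⟩ := Metric.eventually_nhds_iff.mp hlo
  refine ⟨ε, hε, fun z hz => ?_⟩
  have hz' := h (y := z) (by simpa using hz)
  simp only [hF0, sub_zero, smul_eq_mul] at hz'
  have h1 := norm_sub_norm_le (F z) (z * deriv F 0)
  have h2 := norm_sub_norm_le (z * deriv F 0) (F z)
  rw [norm_sub_rev] at h2
  rw [norm_mul] at h1 h2
  constructor <;> linarith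

/-- Reciprocals of large reals at bounded distance `K` differ by `O(K / L ^ 2)`. -/
lemma abs_one_div_sub_one_div_le {L M K : ℝ} (hL : 0 < L) (hLK : 2 * K ≤ L)
    (hML : |M - L| ≤ K) : |1 / M - 1 / L| ≤ 2 * K * (1 / L) ^ 2 := by
  have hM : L / 2 ≤ M := by linarith [(abs_le.mp hML).1]
  have hM0 : 0 < M := by linarith
  have hK : 0 ≤ K := (abs_nonneg _).trans hML
  have heq : 1 / M - 1 / L = (L - M) / (M * L) := by field_simp
  rw [heq, abs_div, abs_of_pos (mul_pos hM0 hL), abs_sub_comm]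
  calc |M - L| / (M * L) ≤ K / (L / 2 * L) := by gcongr
    _ = 2 * K * (1 / L) ^ 2 := by field_simp

/-- If `F` is holomorphic near `0 ∈ ℂ` with `F(0) = 0` and `F′(0) ≠ 0`, then
`ilog|F(z)| = ilog|z| + O((ilog|z|)²)` as `z → 0`, where `ilog x = 1/log(1/x)`:
the logarithmic boundary defining function is well defined up to a
quadratically vanishing term. -/
theorem ilog_welldefined_up_to_quadratic (F : ℂ → ℂ) (U : Set ℂ)
    (hU : IsOpen U) (h0 : (0 : ℂ) ∈ U) (hF : DifferentiableOn ℂ F U)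
    (hF0 : F 0 = 0) (hF' : deriv F 0 ≠ 0) :
    ∃ C > (0 : ℝ), ∃ δ ∈ Set.Ioo (0 : ℝ) 1, ∀ z : ℂ, 0 < ‖z‖ → ‖z‖ < δ →
      0 < ‖F z‖ ∧ ‖F z‖ < 1 ∧
      |1 / Real.log (1 / ‖F z‖) - 1 / Real.log (1 / ‖z‖)| ≤
        C * (1 / Real.log (1 / ‖z‖)) ^ 2 := by
  have ha : 0 < ‖deriv F 0‖ := norm_pos_iff.mpr hF'
  obtain ⟨ε, hε, hb⟩ :=
    exists_linear_bounds (hF.differentiableAt (hU.mem_nhds h0)) hF0 hF'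
  set a := ‖deriv F 0‖
  set K := |Real.log (a / 2)| + |Real.log (3 * a / 2)|
  have hK : 0 ≤ K := by positivity
  -- The radius `exp (-(2 * K + 1))` forces `log (1 / ‖z‖) > 2 * K + 1`.
  refine ⟨2 * K + 1, by positivity, min ε (Real.exp (-(2 * K + 1))),
    ⟨by positivity, (min_le_right _ _).trans_lt (Real.exp_lt_one_iff.mpr (by linarith))⟩,
    fun z hz hzδ => ?_⟩
  obtain ⟨hlow, hupp⟩ := hb z (hzδ.trans_le (min_le_left _ _))
  have hFz : 0 < ‖F z‖ := lt_of_lt_of_le (by positivity) hlow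
  have hlz : Real.log ‖z‖ < -(2 * K + 1) :=
    (Real.log_lt_iff_lt_exp hz).mpr (hzδ.trans_le (min_le_right _ _))
  have h1 := Real.log_le_log (by positivity) hlow
  have h2 := Real.log_le_log hFz hupp
  rw [Real.log_mul (by positivity) hz.ne'] at h1 h2
  have h3 := neg_abs_le (Real.log (a / 2))
  have h4 := le_abs_self (Real.log (3 * a / 2))
  have h5 := abs_nonneg (Real.log (a / 2))
  have h6 := abs_nonneg (Real.log (3 * a / 2))
  have hKdef : K = |Real.log (a / 2)| + |Real.log (3 * a / 2)| := rfl
  have hdiff : |-Real.log ‖F z‖ - -Real.log ‖z‖| ≤ K := by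
    rw [abs_le]
    constructor <;> linarith
  refine ⟨hFz, (Real.log_neg_iff hFz).mp (by linarith), ?_⟩
  simp only [one_div ‖F z‖, one_div ‖z‖, Real.log_inv]
  refine (abs_one_div_sub_one_div_le (by linarith) (by linarith) hdiff).trans ?_
  gcongr
  linarith
end

section
/- Suppose u : [0,1] → ℝ is twice continuously differentiable on [0,1] and satisfies 2π²·u(ρ) = sin²(πρ)·u″(ρ) for all ρ ∈ (0,1). Then u is identically zero. -/
open Real Set

/-!
The function `u²` is convex on `[0,1]`: in the interior
`(u²)″ = 2u'² + 2uu″`, and the equation multiplied by `u″` gives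
`2π²·uu″ = (sin(πρ)·u″)² ≥ 0`. The equation extends continuously to the endpoints, where the
sine vanishes, so `u(0) = u(1) = 0`. A convex function lies below its chord, hence `u² ≤ 0`.
-/

/-- The endpoint values vanish because `sin²(πρ)` does and `u″` extends continuously
to `[0,1]`. -/
lemma endpoint_values_eq_zero (u : ℝ → ℝ) (hu : ContDiffOn ℝ 2 u (Set.Icc 0 1))
    (heq : ∀ ρ ∈ Set.Ioo (0 : ℝ) 1,
      2 * Real.pi ^ 2 * u ρ = Real.sin (Real.pi * ρ) ^ 2 * deriv (deriv u) ρ) :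
    u 0 = 0 ∧ u 1 = 0 := by
  have huniq : UniqueDiffOn ℝ (Icc (0 : ℝ) 1) := uniqueDiffOn_Icc zero_lt_one
  have hw : ContinuousOn (iteratedDerivWithin 2 u (Icc 0 1)) (Icc 0 1) :=
    hu.continuousOn_iteratedDerivWithin (by norm_num) huniq
  have hEq : EqOn (fun ρ => 2 * π ^ 2 * u ρ)
      (fun ρ => sin (π * ρ) ^ 2 * iteratedDerivWithin 2 u (Icc 0 1) ρ) (Ioo 0 1) := by
    intro x hx
    have hc : ContDiffAt ℝ 2 u x := hu.contDiffAt (Icc_mem_nhds hx.1 hx.2)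
    have h2 : iteratedDerivWithin 2 u (Icc 0 1) x = deriv (deriv u) x := by
      rw [iteratedDerivWithin_eq_iteratedDeriv huniq hc (Ioo_subset_Icc_self hx),
        iteratedDeriv_succ, iteratedDeriv_one]
    simp only [h2]
    exact heq x hx
  have hEq' := hEq.of_subset_closure (continuousOn_const.mul hu.continuousOn)
    (ContinuousOn.mul (by fun_prop) hw) Ioo_subset_Icc_self
    (closure_Ioo (zero_ne_one' ℝ)).ge
  have h0 := hEq' (left_mem_Icc.2 zero_le_one)
  have h1 := hEq' (right_mem_Icc.2 zero_le_one)
  simpa [pi_ne_zero] using And.intro h0 h1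

lemma convexOn_sq_of_equation (u : ℝ → ℝ) (hu : ContDiffOn ℝ 2 u (Set.Icc 0 1))
    (heq : ∀ ρ ∈ Set.Ioo (0 : ℝ) 1,
      2 * Real.pi ^ 2 * u ρ = Real.sin (Real.pi * ρ) ^ 2 * deriv (deriv u) ρ) :
    ConvexOn ℝ (Icc (0 : ℝ) 1) (fun ρ => u ρ ^ 2) := by
  have hc : ContDiffOn ℝ 2 u (Ioo 0 1) := hu.mono Ioo_subset_Icc_self
  have hd : ∀ x ∈ Ioo (0 : ℝ) 1, HasDerivAt u (deriv u x) x := fun x hx =>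
    ((hc.contDiffAt (Ioo_mem_nhds hx.1 hx.2)).differentiableAt (by norm_num)).hasDerivAt
  have hd' : ∀ x ∈ Ioo (0 : ℝ) 1, HasDerivAt (deriv u) (deriv (deriv u) x) x := fun x hx =>
    (((hc.deriv_of_isOpen (m := 1) isOpen_Ioo (by norm_num)).contDiffAt
      (Ioo_mem_nhds hx.1 hx.2)).differentiableAt (by norm_num)).hasDerivAt
  refine convexOn_of_hasDerivWithinAt2_nonneg (convex_Icc 0 1) (hu.continuousOn.pow 2)
    (f' := fun x => 2 * u x * deriv u x)
    (f'' := fun x => 2 * deriv u x * deriv u x + 2 * u x * deriv (deriv u) x) ?_ ?_ ?_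
  all_goals rw [interior_Icc]; intro x hx
  · simpa using ((hd x hx).fun_pow 2).hasDerivWithinAt
  · exact (((hd x hx).const_mul 2).mul (hd' x hx)).hasDerivWithinAt
  · have h : 0 ≤ π ^ 2 * (2 * u x * deriv (deriv u) x) := by
      have : π ^ 2 * (2 * u x * deriv (deriv u) x) =
          (sin (π * x) * deriv (deriv u) x) ^ 2 := by
        linear_combination deriv (deriv u) x * heq x hx
      rw [this]
      positivity
    have h' := nonneg_of_mul_nonneg_right h (by positivity)
    nlinarith [mul_self_nonneg (deriv u x)]

/-- If `u` is twice continuously differentiable on `[0,1]` and satisfies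
`2π²·u(ρ) = sin²(πρ)·u″(ρ)` on `(0,1)`, then `u ≡ 0`: the null space of the
reduced operator `Λ̃_{II} + 2` contains no elements smooth up to both
endpoints. -/
theorem reduced_operator_no_smooth_nullspace (u : ℝ → ℝ)
    (hu : ContDiffOn ℝ 2 u (Set.Icc 0 1))
    (heq : ∀ ρ ∈ Set.Ioo (0 : ℝ) 1,
      2 * Real.pi ^ 2 * u ρ = Real.sin (Real.pi * ρ) ^ 2 * deriv (deriv u) ρ) :
    ∀ ρ ∈ Set.Icc (0 : ℝ) 1, u ρ = 0 := by
  intro ρ hρ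
  obtain ⟨h0, h1⟩ := endpoint_values_eq_zero u hu heq
  have h := (convexOn_sq_of_equation u hu heq).le_max_of_mem_Icc
    (left_mem_Icc.2 zero_le_one) (right_mem_Icc.2 zero_le_one) hρ
  simp only [h0, h1, max_self] at h
  exact pow_eq_zero_iff two_ne_zero |>.1
    (le_antisymm (h.trans (by norm_num)) (sq_nonneg (u ρ)))
end

section
/- For every pair (a, b) ∈ ℝ² there exists exactly one twice continuously differentiable function u : (0,1) → ℝ satisfying 2π²·u(ρ) = sin²(πρ)·u″(ρ) on (0,1) together with the boundary conditions lim_{ρ→0⁺} ρ·u(ρ) = a and lim_{ρ→1⁻} (1−ρ)·u(ρ) = b. -/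
/-!
Existence is explicit: `cot (πρ)` and `ρ cot (πρ) - 1/π` both solve the equation, and the combination
`π cot (πρ) (a - (a + b) ρ) + (a + b)` has the required singular data (`explicitSol_isReducedSol`).

Uniqueness is a maximum principle. A solution whose boundary data are both negative is negative near
the endpoints, and at a positive interior maximum the equation would force `u″ > 0`; hence it is
nonpositive (`IsReducedSol.nonpos`). If `u`, `v` have the same data and `p` has data `(1, 1)`, then
`v - u - ε p` has data `(-ε, -ε)`, so `v - u ≤ ε p` for every `ε > 0`, and thus `v ≤ u`.
-/

open Real Set Filter

/-- `u` solves the reduced ODE `2π²u = sin²(πρ)u″` on `(0,1)` with the singular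
boundary data `ρ·u(ρ) → a` at `ρ = 0` and `(1−ρ)·u(ρ) → b` at `ρ = 1`. -/
def IsReducedSol (a b : ℝ) (u : ℝ → ℝ) : Prop :=
  ContDiffOn ℝ 2 u (Set.Ioo 0 1) ∧
  (∀ ρ ∈ Set.Ioo (0 : ℝ) 1,
    2 * Real.pi ^ 2 * u ρ = Real.sin (Real.pi * ρ) ^ 2 * deriv (deriv u) ρ) ∧
  Filter.Tendsto (fun ρ => ρ * u ρ) (nhdsWithin 0 (Set.Ioi 0)) (nhds a) ∧
  Filter.Tendsto (fun ρ => (1 - ρ) * u ρ) (nhdsWithin 1 (Set.Iio 1)) (nhds b)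

/-- The explicit solution `π cot (πρ) (a - (a + b) ρ) + (a + b)` with boundary data `(a, b)`. -/
noncomputable def explicitSol (a b : ℝ) (ρ : ℝ) : ℝ :=
  π * (cos (π * ρ) / sin (π * ρ)) * (a - (a + b) * ρ) + (a + b)

lemma sin_pi_mul_pos {ρ : ℝ} (h : ρ ∈ Ioo (0 : ℝ) 1) : 0 < sin (π * ρ) := by
  apply sin_pos_of_pos_of_lt_pi
  · exact mul_pos pi_pos h.1
  · nlinarith [pi_pos, h.2]

lemma hasDerivAt_sin_pi (ρ : ℝ) : HasDerivAt (fun x => sin (π * x)) (cos (π * ρ) * π) ρ := by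
  simpa using ((hasDerivAt_id ρ).const_mul π).sin

lemma hasDerivAt_cos_pi (ρ : ℝ) : HasDerivAt (fun x => cos (π * x)) (-sin (π * ρ) * π) ρ := by
  simpa using ((hasDerivAt_id ρ).const_mul π).cos

lemma hasDerivAt_cot_pi {ρ : ℝ} (h : ρ ∈ Ioo (0 : ℝ) 1) :
    HasDerivAt (fun x => cos (π * x) / sin (π * x)) (-π / sin (π * ρ) ^ 2) ρ := by
  have hs := (sin_pi_mul_pos h).ne'
  refine ((hasDerivAt_cos_pi ρ).div (hasDerivAt_sin_pi ρ) hs).congr_deriv ?_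
  congr 1
  linear_combination -π * sin_sq_add_cos_sq (π * ρ)

lemma hasDerivAt_affine (a b ρ : ℝ) :
    HasDerivAt (fun x : ℝ => a - (a + b) * x) (-(a + b)) ρ := by
  simpa using ((hasDerivAt_id ρ).const_mul (a + b)).const_sub a

lemma hasDerivAt_explicitSol (a b : ℝ) {ρ : ℝ} (h : ρ ∈ Ioo (0 : ℝ) 1) :
    HasDerivAt (explicitSol a b)
      (-π ^ 2 / sin (π * ρ) ^ 2 * (a - (a + b) * ρ)
        - (a + b) * π * (cos (π * ρ) / sin (π * ρ))) ρ := by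
  refine ((((hasDerivAt_cot_pi h).const_mul π).mul (hasDerivAt_affine a b ρ)).add_const
    (a + b)).congr_deriv ?_
  ring

lemma explicitSol_ode (a b : ℝ) {ρ : ℝ} (h : ρ ∈ Ioo (0 : ℝ) 1) :
    2 * π ^ 2 * explicitSol a b ρ = sin (π * ρ) ^ 2 * deriv (deriv (explicitSol a b)) ρ := by
  have hs := (sin_pi_mul_pos h).ne'
  have heq : deriv (explicitSol a b) =ᶠ[nhds ρ] fun x =>
      -π ^ 2 / sin (π * x) ^ 2 * (a - (a + b) * x)
        - (a + b) * π * (cos (π * x) / sin (π * x)) := by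
    filter_upwards [isOpen_Ioo.mem_nhds h] with x hx
    exact (hasDerivAt_explicitSol a b hx).deriv
  have hd := ((((hasDerivAt_const ρ (-π ^ 2)).div ((hasDerivAt_sin_pi ρ).pow 2)
    (pow_ne_zero 2 hs)).mul (hasDerivAt_affine a b ρ)).sub
      ((hasDerivAt_cot_pi h).const_mul ((a + b) * π))).deriv
  rw [heq.deriv_eq]
  refine Eq.trans ?_ (congrArg (sin (π * ρ) ^ 2 * ·) hd.symm)
  simp only [explicitSol, Pi.pow_apply, Pi.div_apply]
  field_simp
  ring

/-- Rewriting `πρ / sin (πρ)` as `1 / sinc (πρ)` removes the singularity at `0`. -/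
lemma explicitSol_tendsto_zero (a b : ℝ) :
    Tendsto (fun ρ => ρ * explicitSol a b ρ) (nhdsWithin 0 (Ioi 0)) (nhds a) := by
  have hc : ContinuousAt (fun ρ : ℝ =>
      (sinc (π * ρ))⁻¹ * cos (π * ρ) * (a - (a + b) * ρ) + (a + b) * ρ) 0 := by
    have h1 : ContinuousAt (fun ρ : ℝ => (sinc (π * ρ))⁻¹) 0 := by
      apply ContinuousAt.inv₀
      · exact (continuous_sinc.comp (continuous_const.mul continuous_id)).continuousAt
      · simp
    fun_prop
  have ht := hc.tendsto.mono_left (nhdsWithin_le_nhds (s := Ioi (0 : ℝ)))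
  simp only [mul_zero, sinc_zero, cos_zero, inv_one, mul_one, sub_zero, one_mul, add_zero] at ht
  refine ht.congr' ?_
  filter_upwards [Ioo_mem_nhdsGT (zero_lt_one' ℝ)] with ρ h
  have hs := (sin_pi_mul_pos h).ne'
  have hp : π * ρ ≠ 0 := (mul_pos pi_pos h.1).ne'
  rw [sinc_of_ne_zero hp, explicitSol]
  field_simp

/-- The reflection `ρ ↦ 1 - ρ` exchanges the two boundary data. -/
lemma explicitSol_one_sub (a b ρ : ℝ) : explicitSol a b (1 - ρ) = explicitSol b a ρ := by
  have h : π * (1 - ρ) = π - π * ρ := by ring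
  rw [explicitSol, explicitSol, h, cos_pi_sub, sin_pi_sub]
  ring

lemma explicitSol_isReducedSol (a b : ℝ) : IsReducedSol a b (explicitSol a b) := by
  refine ⟨?_, fun ρ h => explicitSol_ode a b h, explicitSol_tendsto_zero a b, ?_⟩
  · unfold explicitSol
    refine ((contDiffOn_const.mul (ContDiffOn.div (by fun_prop) (by fun_prop) ?_)).mul
      (by fun_prop)).add contDiffOn_const
    exact fun x hx => (sin_pi_mul_pos hx).ne'
  · have hm : Tendsto (fun ρ : ℝ => 1 - ρ) (nhdsWithin 1 (Iio 1)) (nhdsWithin 0 (Ioi 0)) := by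
      refine tendsto_nhdsWithin_iff.2 ⟨?_, ?_⟩
      · have : ContinuousAt (fun ρ : ℝ => 1 - ρ) 1 := by fun_prop
        simpa using this.tendsto.mono_left (nhdsWithin_le_nhds (s := Iio (1 : ℝ)))
      · filter_upwards [self_mem_nhdsWithin] with ρ h
        exact sub_pos.2 (mem_Iio.1 h)
    refine ((explicitSol_tendsto_zero b a).comp hm).congr fun ρ => ?_
    simp only [Function.comp, explicitSol_one_sub]

lemma IsReducedSol.add_smul {a b c d : ℝ} {u v : ℝ → ℝ} (hu : IsReducedSol a b u)
    (hv : IsReducedSol c d v) (s : ℝ) :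
    IsReducedSol (a + s * c) (b + s * d) (fun ρ => u ρ + s * v ρ) := by
  obtain ⟨hu1, hu2, hu3, hu4⟩ := hu
  obtain ⟨hv1, hv2, hv3, hv4⟩ := hv
  have hdiff : ∀ {w : ℝ → ℝ}, ContDiffOn ℝ 2 w (Ioo 0 1) → ∀ x ∈ Ioo (0 : ℝ) 1,
      DifferentiableAt ℝ w x ∧ DifferentiableAt ℝ (deriv w) x := by
    intro w hw x hx
    have hn := isOpen_Ioo.mem_nhds hx
    refine ⟨(hw.differentiableOn (by norm_num)).differentiableAt hn, ?_⟩
    have h1 : ContDiffOn ℝ 1 (deriv w) (Ioo 0 1) :=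
      hw.deriv_of_isOpen isOpen_Ioo (by norm_num)
    exact (h1.differentiableOn (by norm_num)).differentiableAt hn
  refine ⟨hu1.add (contDiffOn_const.mul hv1), fun ρ h => ?_, ?_, ?_⟩
  · have heq : deriv (fun ρ => u ρ + s * v ρ) =ᶠ[nhds ρ] fun x => deriv u x + s * deriv v x := by
      filter_upwards [isOpen_Ioo.mem_nhds h] with x hx
      exact ((hdiff hu1 x hx).1.hasDerivAt.add
        ((hdiff hv1 x hx).1.hasDerivAt.const_mul s)).deriv
    have hd : deriv (fun x => deriv u x + s * deriv v x) ρ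
        = deriv (deriv u) ρ + s * deriv (deriv v) ρ :=
      ((hdiff hu1 ρ h).2.hasDerivAt.add ((hdiff hv1 ρ h).2.hasDerivAt.const_mul s)).deriv
    rw [heq.deriv_eq, hd]
    linear_combination hu2 ρ h + s * hv2 ρ h
  · exact (hu3.add (hv3.const_mul s)).congr fun ρ => by ring
  · exact (hu4.add (hv4.const_mul s)).congr fun ρ => by ring

/-- Maximum principle: negative singular data at both ends force a nonpositive solution. -/
lemma IsReducedSol.nonpos {a b : ℝ} {u : ℝ → ℝ} (hu : IsReducedSol a b u) (ha : a < 0)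
    (hb : b < 0) {ρ : ℝ} (hρ : ρ ∈ Ioo (0 : ℝ) 1) : u ρ ≤ 0 := by
  obtain ⟨hu1, hu2, hu3, hu4⟩ := hu
  by_contra! hpos
  obtain ⟨l, hl, hl'⟩ := (mem_nhdsGT_iff_exists_Ioo_subset).1 (hu3.eventually (gt_mem_nhds ha))
  obtain ⟨r, hr, hr'⟩ := (mem_nhdsLT_iff_exists_Ioo_subset).1 (hu4.eventually (gt_mem_nhds hb))
  have hl0 : (0 : ℝ) < l := hl
  have hr1 : r < 1 := hr
  have hleft : ∀ x, 0 < x → x < l → u x < 0 := fun x h0 h1 => by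
    have : x * u x < 0 := hl' ⟨h0, h1⟩
    by_contra! h
    nlinarith [mul_nonneg h0.le h]
  have hright : ∀ x, r < x → x < 1 → u x < 0 := fun x h0 h1 => by
    have : (1 - x) * u x < 0 := hr' ⟨h0, h1⟩
    by_contra! h
    nlinarith [mul_nonneg (sub_pos.2 h1).le h]
  have hlρ : l ≤ ρ := by
    by_contra! h
    exact (hleft ρ hρ.1 h).not_gt hpos
  have hρr : ρ ≤ r := by
    by_contra! h
    exact (hright ρ h hρ.2).not_gt hpos
  have hsub : Icc l r ⊆ Ioo (0 : ℝ) 1 := fun x hx => ⟨hl0.trans_le hx.1, hx.2.trans_lt hr1⟩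
  obtain ⟨m, hm, hmax⟩ := isCompact_Icc.exists_isMaxOn ⟨ρ, hlρ, hρr⟩ (hu1.continuousOn.mono hsub)
  have hm01 := hsub hm
  have hum : 0 < u m := hpos.trans_le (hmax ⟨hlρ, hρr⟩)
  have hlocmax : IsLocalMax u m := by
    filter_upwards [isOpen_Ioo.mem_nhds hm01] with x hx
    rcases lt_or_ge x l with h | h
    · exact ((hleft x hx.1 h).trans hum).le
    rcases lt_or_ge r x with h' | h'
    · exact ((hright x h' hx.2).trans hum).le
    · exact hmax ⟨h, h'⟩
  have hdd : 0 < deriv (deriv u) m := by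
    have hs := sin_pi_mul_pos hm01
    have h2 : 0 < sin (π * m) ^ 2 * deriv (deriv u) m := by
      rw [← hu2 m hm01]; positivity
    exact (pos_iff_pos_of_mul_pos h2).1 (by positivity)
  -- By the second derivative test `m` is also a local minimum, so `u` is constant near `m`.
  have hlocmin : IsLocalMin u m := isLocalMin_of_deriv_deriv_pos hdd hlocmax.deriv_eq_zero
    (hu1.continuousOn.continuousAt (isOpen_Ioo.mem_nhds hm01))
  have hconst : u =ᶠ[nhds m] fun _ => u m := by
    filter_upwards [hlocmax, hlocmin] with x h1 h2
    exact le_antisymm h1 h2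
  have h0 : deriv (deriv u) m = 0 := by
    rw [hconst.deriv.deriv_eq]
    simp
  exact hdd.ne' h0

lemma IsReducedSol.le {a b : ℝ} {u v : ℝ → ℝ} (hu : IsReducedSol a b u)
    (hv : IsReducedSol a b v) {ρ : ℝ} (hρ : ρ ∈ Ioo (0 : ℝ) 1) : v ρ ≤ u ρ := by
  set p := explicitSol 1 1 with hp
  have key : ∀ ε > 0, v ρ - u ρ ≤ ε * p ρ := fun ε hε => by
    have h := ((hv.add_smul hu (-1)).add_smul (explicitSol_isReducedSol 1 1) (-ε)).nonpos
      (by linarith) (by linarith) hρ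
    simp only [← hp] at h
    linarith
  have ht : Tendsto (fun ε : ℝ => ε * p ρ) (nhdsWithin 0 (Ioi 0)) (nhds 0) := by
    have : ContinuousAt (fun ε : ℝ => ε * p ρ) 0 := by fun_prop
    simpa using this.tendsto.mono_left (nhdsWithin_le_nhds (s := Ioi (0 : ℝ)))
  have := ge_of_tendsto ht (by
    filter_upwards [self_mem_nhdsWithin] with ε hε using key ε hε)
  linarith

/-- For every `(a,b) ∈ ℝ²` there is exactly one twice continuously
differentiable solution of `2π²u = sin²(πρ)u″` on `(0,1)` with
`ρ·u(ρ) → a` as `ρ → 0⁺` and `(1−ρ)·u(ρ) → b` as `ρ → 1⁻`. -/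
theorem reduced_ode_unique_singular_solution (a b : ℝ) :
    ∃ u : ℝ → ℝ, IsReducedSol a b u ∧
      ∀ v : ℝ → ℝ, IsReducedSol a b v → ∀ ρ ∈ Set.Ioo (0 : ℝ) 1, v ρ = u ρ := by
  have hu := explicitSol_isReducedSol a b
  exact ⟨_, hu, fun v hv ρ hρ => le_antisymm (hu.le hv hρ) (hv.le hu hρ)⟩
end
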